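/- Let M = c + εD ∈ 𝔻ℍ[t] be a bounded monic reduced translational motion polynomial of degree n with c ∈ ℝ[t], D ∈ ℍ[t], and ν(M) = c² = N₁ⁿ for an irreducible quadratic N₁ ∈ ℝ[t]. Let t − p − εd (p, d ∈ ℍ) be a linear bounded monic reduced motion polynomial with ν(t − p − εd) = N₂ for an irreducible quadratic N₂ ∈ ℝ[t] coprime to N₁. If M admits a factorization into monic linear motion polynomial factors, then there exist D₁ ∈ ℍ[t] and d₁ ∈ ℍ such that M·(t − p − εd) = (t − p − εd₁)·(c + εD₁), where t − p − εd₁ is a motion polynomial and c + εD₁ admits a factorization into monic linear motion polynomial factors. -/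

import Mathlib

open Polynomial DualNumber TrivSqZeroExt

noncomputable section

/-- The real quaternions. -/
abbrev Hq : Type := Quaternion ℝ

/-- The dual quaternions. -/
abbrev DHq : Type := DualNumber Hq

/-- Conjugation of a dual quaternion: `(p + ε d)* = p* + ε d*`. -/
instance : Star DHq := ⟨fun x => inl (star x.fst) + inr (star x.snd)⟩

/-- Coefficient-wise (quaternion) conjugation of a polynomial. -/
def cstar {R : Type*} [Semiring R] [Star R] (A : R[X]) : R[X] :=
  A.sum fun n a => Polynomial.C (star a) * Polynomial.X ^ n

/-- The embedding `ℝ[t] → ℍ[t]`. -/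
def qPoly (f : ℝ[X]) : Hq[X] := f.map (algebraMap ℝ Hq)

/-- The embedding `ℍ[t] → 𝔻ℍ[t]` (primal part). -/
def dhQ (P : Hq[X]) : DHq[X] := P.map (inlHom Hq Hq)

/-- The embedding `ℝ[t] → 𝔻ℍ[t]`. -/
def dPoly (f : ℝ[X]) : DHq[X] := dhQ (qPoly f)

/-- The dual quaternion polynomial `P + ε D` with primal part `P` and dual part `D`. -/
def mp (P D : Hq[X]) : DHq[X] := dhQ P + Polynomial.C ε * dhQ D

/-- The primal part of a dual quaternion polynomial. -/
def primal (A : DHq[X]) : Hq[X] := A.map (fstHom ℝ Hq Hq).toRingHom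

/-- A motion polynomial: a dual quaternion polynomial whose norm polynomial
`ν(M) = M·M*` is a nonzero real polynomial. -/
def IsMotion (M : DHq[X]) : Prop := ∃ f : ℝ[X], f ≠ 0 ∧ M * cstar M = dPoly f

/-- A real polynomial divides a quaternion polynomial. -/
def RDvdQ (f : ℝ[X]) (A : Hq[X]) : Prop := ∃ B : Hq[X], A = qPoly f * B

/-- A real polynomial divides a dual quaternion polynomial. -/
def RDvdD (f : ℝ[X]) (A : DHq[X]) : Prop := ∃ B : DHq[X], A = dPoly f * B

/-- `g` is the greatest common monic real polynomial divisor of a quaternion polynomial `A`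
(with itself), i.e. `g = mrpf A`. -/
def IsMrpfQ (g : ℝ[X]) (A : Hq[X]) : Prop :=
  g.Monic ∧ RDvdQ g A ∧ ∀ f : ℝ[X], f.Monic → RDvdQ f A → f ∣ g

/-- `g` is the greatest common monic real polynomial divisor of `c ∈ ℝ[t]` and a quaternion
polynomial `A`, i.e. `g = mrpf(c, A)`. -/
def IsMrpf2 (g : ℝ[X]) (c : ℝ[X]) (A : Hq[X]) : Prop :=
  g.Monic ∧ g ∣ c ∧ RDvdQ g A ∧
    ∀ f : ℝ[X], f.Monic → f ∣ c → RDvdQ f A → f ∣ g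

/-- `g` is the greatest common monic real polynomial divisor of `c ∈ ℝ[t]` and two quaternion
polynomials `A` and `B`, i.e. `g = mrpf(c, A, B)`. -/
def IsMrpf3 (g : ℝ[X]) (c : ℝ[X]) (A B : Hq[X]) : Prop :=
  g.Monic ∧ g ∣ c ∧ RDvdQ g A ∧ RDvdQ g B ∧
    ∀ f : ℝ[X], f.Monic → f ∣ c → RDvdQ f A → RDvdQ f B → f ∣ g

/-- A quaternion polynomial is reduced: `mrpf = 1`, i.e. it has only constant real
polynomial factors. -/
def ReducedQ (A : Hq[X]) : Prop := ∀ f : ℝ[X], f.Monic → RDvdQ f A → f = 1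

/-- A dual quaternion polynomial is reduced: `mrpf = 1`. -/
def ReducedD (A : DHq[X]) : Prop := ∀ f : ℝ[X], f.Monic → RDvdD f A → f = 1

/-- Boundedness of a (monic reduced) motion polynomial: `mrpf` of its primal part has
no real root, equivalently no linear real polynomial `t - a` divides the primal part. -/
def BoundedD (M : DHq[X]) : Prop :=
  ∀ a : ℝ, ¬ RDvdQ (Polynomial.X - Polynomial.C a) (primal M)

/-- A generic motion polynomial: monic, a motion polynomial, with `mrpf` of the primal
part equal to `1`. -/
def GenericD (M : DHq[X]) : Prop :=
  M.Monic ∧ IsMotion M ∧ ReducedQ (primal M)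

/-- The monic linear dual quaternion polynomial `t - p - ε d`. -/
def lin (p d : Hq) : DHq[X] := mp (Polynomial.X - Polynomial.C p) (-Polynomial.C d)

/-- `M` admits a factorization into monic linear motion polynomial factors. -/
def HasLinFact (M : DHq[X]) : Prop :=
  ∃ L : List DHq, (∀ h ∈ L, IsMotion (Polynomial.X - Polynomial.C h)) ∧
    M = (L.map fun h => Polynomial.X - Polynomial.C h).prod

end

noncomputable section BF
theorem bf_star_fst (x : DHq) : (star x).fst = star x.fst := by
  show (inl (star x.fst) + inr (star x.snd) : DHq).fst = _
  simp
theorem bf_star_snd (x : DHq) : (star x).snd = star x.snd := by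
  show (inl (star x.fst) + inr (star x.snd) : DHq).snd = _
  simp

instance bfStarRing : StarRing DHq where
  star_involutive x := by
    apply TrivSqZeroExt.ext <;> simp [bf_star_fst, bf_star_snd]
  star_mul x y := by
    apply TrivSqZeroExt.ext <;> simp [bf_star_fst, bf_star_snd, add_comm]
  star_add x y := by
    apply TrivSqZeroExt.ext <;> simp [bf_star_fst, bf_star_snd]

theorem bf_coeff (A : DHq[X]) (n : ℕ) : (cstar A).coeff n = star (A.coeff n) := by
  unfold cstar
  rw [Polynomial.sum_def, Polynomial.finsetSum_coeff]
  simp only [Polynomial.coeff_C_mul_X_pow]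
  by_cases h : n ∈ A.support
  · rw [Finset.sum_eq_single n] <;> simp_all
    intro b hb h1 h2; exact absurd h2.symm h1
  · rw [Finset.sum_eq_zero]
    · simp at h; simp [h]
    · intro x hx
      rw [if_neg]; rintro rfl; exact h hx

theorem bf_cstar_mul (A B : DHq[X]) : cstar (A * B) = cstar B * cstar A := by
  ext1 n
  rw [bf_coeff, Polynomial.coeff_mul, Polynomial.coeff_mul, star_sum,
    ← Finset.Nat.sum_antidiagonal_swap]
  simp [bf_coeff]

theorem bf_cstar_one : cstar (1 : DHq[X]) = 1 := by
  ext1 n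
  rw [bf_coeff, Polynomial.coeff_one]
  split_ifs <;> simp

theorem bf_cstar_lin (h : DHq) : cstar (X - C h : DHq[X]) = X - C (star h) := by
  ext1 n
  rw [bf_coeff]
  simp only [Polynomial.coeff_sub, Polynomial.coeff_X, Polynomial.coeff_C, star_sub]
  split_ifs <;> simp

theorem bf_dPoly_coeff (f : ℝ[X]) (n : ℕ) :
    (dPoly f).coeff n = inl (algebraMap ℝ Hq (f.coeff n)) := by
  simp [dPoly, dhQ, qPoly]

theorem bf_mp_coeff (P D : Hq[X]) (n : ℕ) :
    (mp P D).coeff n = inl (P.coeff n) + inr (D.coeff n) := by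
  simp [mp, dhQ]
  apply TrivSqZeroExt.ext <;> simp

theorem bf_lin (p d : Hq) : lin p d = X - C (inl p + inr d : DHq) := by
  ext1 n
  unfold lin
  rw [bf_mp_coeff]
  simp only [Polynomial.coeff_sub, Polynomial.coeff_X, Polynomial.coeff_C, Polynomial.coeff_neg]
  split_ifs <;> (apply TrivSqZeroExt.ext <;> simp)

theorem bf_dPoly_mul (f g : ℝ[X]) : dPoly (f * g) = dPoly f * dPoly g := by
  simp [dPoly, dhQ, qPoly]
theorem bf_dPoly_one : dPoly 1 = 1 := by
  simp [dPoly, dhQ, qPoly]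

theorem bf_dPoly_inj (f g : ℝ[X]) (h : dPoly f = dPoly g) : f = g := by
  ext1 n
  have := congrArg (fun A => (A.coeff n).fst) h
  simp only [bf_dPoly_coeff, fst_inl] at this
  exact (algebraMap ℝ Hq).injective this

theorem bf_dPoly_comm (f : ℝ[X]) (A : DHq[X]) : dPoly f * A = A * dPoly f := by
  ext1 n
  rw [Polynomial.coeff_mul, Polynomial.coeff_mul, ← Finset.Nat.sum_antidiagonal_swap]
  refine Finset.sum_congr rfl fun x _ => ?_
  simp only [bf_dPoly_coeff, Prod.fst_swap, Prod.snd_swap]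
  apply TrivSqZeroExt.ext <;> simp [Quaternion.coe_commutes]

/-- trace `a`, norm `b` -/
def BfTN (a b : ℝ) (h : DHq) : Prop :=
  h + star h = inl (algebraMap ℝ Hq a) ∧ h * star h = inl (algebraMap ℝ Hq b)

theorem bf_lin_mul (h k : DHq) : (X - C h : DHq[X]) * (X - C k) =
    X ^ 2 - C (h + k) * X + C (h * k) := by
  simp only [sub_mul, mul_sub, C_add, C_mul, add_mul, sq, X_mul_C]
  abel

theorem bf_quad (a b : ℝ) : dPoly (X ^ 2 - C a * X + C b) =
    X ^ 2 - C (inl (algebraMap ℝ Hq a)) * X + C (inl (algebraMap ℝ Hq b)) := by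
  simp [dPoly, dhQ, qPoly]

theorem bf_norm (a b : ℝ) (h : DHq) (H : BfTN a b h) :
    (X - C h) * cstar (X - C h) = dPoly (X ^ 2 - C a * X + C b) := by
  rw [bf_cstar_lin, bf_lin_mul, bf_quad, H.1, H.2]

theorem bf_norm_ne (a b : ℝ) : (X ^ 2 - C a * X + C b : ℝ[X]) ≠ 0 := by
  intro h
  have := congrArg (fun A => A.coeff 2) h
  simp [coeff_X, coeff_C] at this

theorem bf_motion (a b : ℝ) (h : DHq) (H : BfTN a b h) : IsMotion (X - C h) :=
  ⟨_, bf_norm_ne a b, bf_norm a b h H⟩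

theorem bf_motion' (h : DHq) (f : ℝ[X]) (H : (X - C h) * cstar (X - C h) = dPoly f) :
    ∃ a b, BfTN a b h := by
  rw [bf_cstar_lin, bf_lin_mul] at H
  refine ⟨-f.coeff 1, f.coeff 0, ?_, ?_⟩
  · have := congrArg (fun A => A.coeff 1) H
    simp only [bf_dPoly_coeff] at this
    simp only [coeff_add, coeff_sub, coeff_C_mul, coeff_X_pow, coeff_X, coeff_C] at this
    simp at this
    rw [add_comm, map_neg, inl_neg]; erw [← this]; abel
  · have := congrArg (fun A => A.coeff 0) H
    simp only [bf_dPoly_coeff] at this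
    simp only [coeff_add, coeff_sub, coeff_C_mul, coeff_X_pow, coeff_X, coeff_C] at this
    simpa using this

theorem bf_central (x y : DHq) : x * star x * y = y * (x * star x) := by
  apply TrivSqZeroExt.ext
  · simp [bf_star_fst, bf_star_snd, Quaternion.self_mul_star, Quaternion.coe_commutes]
  · simp [bf_star_fst, bf_star_snd]
    ext <;> simp <;> ring

theorem bf_star_comm (x : DHq) : star x * x = x * star x := by
  apply TrivSqZeroExt.ext
  · simp [bf_star_fst, bf_star_snd, Quaternion.self_mul_star, Quaternion.star_mul_self]
  · simp [bf_star_fst, bf_star_snd]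
    ext <;> simp <;> ring

theorem bf_flip (a b a' b' : ℝ) (h k : DHq) (hh : BfTN a b h) (hk : BfTN a' b' k)
    (hne : h.fst ≠ star k.fst) :
    ∃ (k' h' : DHq), BfTN a' b' k' ∧ BfTN a b h' ∧
      (X - C h : DHq[X]) * (X - C k) = (X - C k') * (X - C h') := by
  set u : DHq := h - star k with hu
  have hu0 : u.fst ≠ 0 := by
    simp [hu, bf_star_fst, sub_eq_zero, hne]
  obtain ⟨v, huv, hvu⟩ : ∃ v, u * v = 1 ∧ v * u = 1 :=
    ⟨u⁻¹, TrivSqZeroExt.mul_inv_cancel hu0, TrivSqZeroExt.inv_mul_cancel hu0⟩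
  have hsuv : star v * star u = 1 := by rw [← star_mul, huv, star_one]
  have hsvu : star u * star v = 1 := by rw [← star_mul, hvu, star_one]
  have hstar : star (u * k * v) = u * star k * v := by
    have h1 : star (u * k * v) = star v * (star k * star u) := by simp [star_mul]
    have h2 : star k * (star u * u) = (star u * u) * star k := by
      rw [bf_star_comm]; exact (bf_central u _).symm
    calc star (u * k * v) = star v * (star k * star u) * (u * v) := by rw [h1, huv, mul_one]
      _ = star v * (star k * (star u * u)) * v := by noncomm_ring
      _ = (star v * star u) * (u * star k * v) := by rw [h2]; noncomm_ring
      _ = _ := by rw [hsuv, one_mul]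
  set k' := u * k * v with hk'
  have ck : ∀ (r : ℝ) (x : DHq), inl (algebraMap ℝ Hq r) * x = x * inl (algebraMap ℝ Hq r) := by
    intro r x
    apply TrivSqZeroExt.ext <;> simp [Quaternion.coe_commutes]
  have hTk' : BfTN a' b' k' := by
    constructor
    · rw [hstar, hk', ← add_mul, ← mul_add, hk.1, ← ck, mul_assoc, huv, mul_one]
    · rw [hstar, hk']
      calc u * k * v * (u * star k * v) = u * k * (v * u) * (star k * v) := by noncomm_ring
        _ = u * (k * star k) * v := by rw [hvu]; noncomm_ring
        _ = _ := by rw [hk.2, ← ck, mul_assoc, huv, mul_one]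
  have hfac : (X - C h : DHq[X]) * (X - C k) = (X - C k') * (X - C (h + k - k')) := by
    rw [bf_lin_mul, bf_lin_mul]
    congr 2
    · congr 2; abel_nf
    · have e1 : k' * u = u * k := by rw [hk', mul_assoc, hvu, mul_one]
      have e2 : k' * k' = (k' + star k') * k' - k' * star k' := by
        have : star k' * k' = k' * star k' := bf_star_comm k'
        rw [add_mul, this]; abel
      have e3 : k' * k' = (k + star k) * k' - k * star k := by
        rw [e2, hTk'.1, hTk'.2, hk.1, hk.2]
      have e4 : (k + star k) * k' = k' * (k + star k) := by rw [hk.1, ck]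
      have e5 : u * k = h * k - k * star k := by rw [hu, sub_mul, bf_star_comm]
      calc h * k = u * k + k * star k := by rw [e5]; abel
        _ = k' * (h - star k) + k * star k := by rw [← e1]
        _ = k' * (h + k) - (k' * (k + star k) - k * star k) := by noncomm_ring
        _ = _ := by rw [← e4, ← e3]; noncomm_ring
  refine ⟨k', h + k - k', hTk', ?_, hfac⟩
  have hsum : (h + k - k') + star (h + k - k') = inl (algebraMap ℝ Hq a) := by
    have : (h + k - k') + star (h + k - k') = (h + star h) + (k + star k) - (k' + star k') := by
      simp only [star_add, star_sub]; abel
    rw [this, hh.1, hk.1, hTk'.1]; abel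
  refine ⟨hsum, ?_⟩
  set h' := h + k - k' with hh'
  have hKK : cstar (X - C k' : DHq[X]) * (X - C k') = dPoly (X ^ 2 - C a' * X + C b') := by
    rw [bf_cstar_lin, bf_lin_mul, bf_star_comm, add_comm (star k'), hTk'.1, hTk'.2, bf_quad]
  have l : ((X - C h : DHq[X]) * (X - C k)) * (cstar (X - C k) * cstar (X - C h)) =
      dPoly (X ^ 2 - C a * X + C b) * dPoly (X ^ 2 - C a' * X + C b') := by
    calc _ = (X - C h) * ((X - C k) * cstar (X - C k)) * cstar (X - C h) := by
          simp only [mul_assoc]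
      _ = _ := by
        rw [bf_norm _ _ _ hk, ← bf_dPoly_comm, mul_assoc, bf_norm _ _ _ hh, bf_dPoly_comm]
  have e : ((X - C k' : DHq[X]) * (X - C h')) * (cstar (X - C h') * cstar (X - C k')) =
      dPoly (X ^ 2 - C a * X + C b) * dPoly (X ^ 2 - C a' * X + C b') := by
    rw [← l, ← bf_cstar_mul, ← bf_cstar_mul, hfac]
  have hmon : (dPoly (X ^ 2 - C a' * X + C b')).Monic := by
    unfold dPoly dhQ qPoly
    apply Monic.map
    apply Monic.map
    rw [sub_eq_add_neg, ← neg_mul, ← C_neg]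
    monicity!
  have hQ : (X - C h') * cstar (X - C h') = dPoly (X ^ 2 - C a * X + C b) := by
    apply hmon.isRegular.left
    apply hmon.isRegular.right
    show dPoly (X ^ 2 - C a' * X + C b') * _ * dPoly (X ^ 2 - C a' * X + C b') =
      dPoly (X ^ 2 - C a' * X + C b') * _ * dPoly (X ^ 2 - C a' * X + C b')
    calc _ = cstar (X - C k') * (((X - C k' : DHq[X]) * (X - C h')) *
            (cstar (X - C h') * cstar (X - C k'))) * (X - C k') := by
          rw [← hKK]; simp only [mul_assoc]
      _ = _ := by
        rw [e, ← bf_dPoly_mul, ← bf_dPoly_comm, mul_assoc, hKK, bf_dPoly_mul,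
          bf_dPoly_comm (X ^ 2 - C a * X + C b)]
  rw [bf_cstar_lin, bf_lin_mul, bf_quad] at hQ
  have := congrArg (fun A => A.coeff 0) hQ
  simp only [coeff_add, coeff_sub, coeff_C_mul, coeff_X_pow, coeff_X, coeff_C] at this
  simpa using this

theorem bf_list (a' b' : ℝ) (L : List DHq) : ∀ (k : DHq), BfTN a' b' k →
    (∀ h ∈ L, ∃ a b, BfTN a b h ∧ ¬ (a = a' ∧ b = b')) →
    ∃ (k' : DHq) (L' : List DHq), BfTN a' b' k' ∧ (∀ h ∈ L', ∃ a b, BfTN a b h) ∧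
      (L.map fun h => (X - C h : DHq[X])).prod * (X - C k) =
        (X - C k') * (L'.map fun h => (X - C h : DHq[X])).prod := by
  induction L with
  | nil => intro k hk _; exact ⟨k, [], hk, by simp, by simp⟩
  | cons h L ih =>
    intro k hk hL
    obtain ⟨k1, L1, hk1, hL1, e1⟩ := ih k hk (fun x hx => hL x (List.mem_cons_of_mem _ hx))
    obtain ⟨a, b, hh, hab⟩ := hL h List.mem_cons_self
    have hne : h.fst ≠ star k1.fst := by
      intro hc
      apply hab
      have A := congrArg TrivSqZeroExt.fst hh.1
      have B := congrArg TrivSqZeroExt.fst hh.2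
      have A' := congrArg TrivSqZeroExt.fst hk1.1
      have B' := congrArg TrivSqZeroExt.fst hk1.2
      simp only [fst_add, fst_mul, bf_star_fst, fst_inl] at A B A' B'
      rw [hc, star_star] at A B
      rw [add_comm, A'] at A
      rw [Quaternion.star_mul_self, ← Quaternion.self_mul_star, B'] at B
      exact ⟨((algebraMap ℝ Hq).injective A).symm, ((algebraMap ℝ Hq).injective B).symm⟩
    obtain ⟨k2, h2, hk2, hh2, e2⟩ := bf_flip a b a' b' h k1 hh hk1 hne
    refine ⟨k2, h2 :: L1, hk2, ?_, ?_⟩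
    · intro x hx
      rcases List.mem_cons.1 hx with rfl | hx
      · exact ⟨a, b, hh2⟩
      · exact hL1 x hx
    · simp only [List.map_cons, List.prod_cons]
      rw [mul_assoc, e1, ← mul_assoc, e2, mul_assoc]

theorem bf_list_norm (L : List DHq) (hL : ∀ h ∈ L, IsMotion (X - C h)) :
    ∃ F : ℝ[X], (L.map fun h => (X - C h : DHq[X])).prod *
      cstar (L.map fun h => (X - C h : DHq[X])).prod = dPoly F ∧
      ∀ h ∈ L, ∃ a b, BfTN a b h ∧ (X ^ 2 - C a * X + C b) ∣ F := by
  induction L with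
  | nil => exact ⟨1, by simp [bf_cstar_one, bf_dPoly_one], by simp⟩
  | cons h L ih =>
    obtain ⟨F, hF, hF'⟩ := ih (fun x hx => hL x (List.mem_cons_of_mem _ hx))
    obtain ⟨f, -, hf⟩ := hL h List.mem_cons_self
    obtain ⟨a, b, hab⟩ := bf_motion' h f hf
    refine ⟨F * (X ^ 2 - C a * X + C b), ?_, ?_⟩
    · simp only [List.map_cons, List.prod_cons]
      rw [bf_cstar_mul, bf_dPoly_mul, ← bf_norm a b h hab, ← hF]
      generalize (L.map fun h => (X - C h : DHq[X])).prod = P at *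
      calc _ = (X - C h) * (P * cstar P) * cstar (X - C h) := by simp only [mul_assoc]
        _ = _ := by rw [hF, ← bf_dPoly_comm, mul_assoc]
    · intro x hx
      rcases List.mem_cons.1 hx with rfl | hx
      · exact ⟨a, b, hab, Dvd.intro_left _ rfl⟩
      · obtain ⟨a, b, h1, h2⟩ := hF' x hx
        exact ⟨a, b, h1, h2.mul_right _⟩

theorem bf_primal_mul (A B : DHq[X]) : primal (A * B) = primal A * primal B := by
  simp [primal, Polynomial.map_mul]

theorem bf_primal_coeff (A : DHq[X]) (n : ℕ) : (primal A).coeff n = (A.coeff n).fst := by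
  simp [primal]

theorem bf_primal_mp (P D : Hq[X]) : primal (mp P D) = P := by
  ext1 n
  rw [bf_primal_coeff, bf_mp_coeff]; simp

theorem bf_primal_dPoly (f : ℝ[X]) : primal (dPoly f) = qPoly f := by
  ext1 n
  rw [bf_primal_coeff, bf_dPoly_coeff]; simp [qPoly]

theorem bf_primal_lin (h : DHq) : primal (X - C h) = X - C h.fst := by
  simp [primal]

theorem bf_mp_eta (A : DHq[X]) : ∃ D, A = mp (primal A) D := by
  refine ⟨A.sum fun n a => C a.snd * X ^ n, ?_⟩
  have hc : ∀ n, (A.sum fun n a => C a.snd * X ^ n).coeff n = (A.coeff n).snd := by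
    intro n
    rw [Polynomial.sum_def, Polynomial.finsetSum_coeff]
    simp only [Polynomial.coeff_C_mul_X_pow]
    by_cases h : n ∈ A.support
    · rw [Finset.sum_eq_single n] <;> simp_all
      intro b hb h1 h2; exact absurd h2.symm h1
    · rw [Finset.sum_eq_zero]
      · simp at h; simp [h]
      · intro x hx
        rw [if_neg]; rintro rfl; exact h hx
  ext1 n
  rw [bf_mp_coeff, hc, bf_primal_coeff]
  exact (inl_fst_add_inr_snd_eq _).symm

theorem bf_qPoly_comm (f : ℝ[X]) (A : Hq[X]) : qPoly f * A = A * qPoly f := by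
  ext1 n
  rw [Polynomial.coeff_mul, Polynomial.coeff_mul, ← Finset.Nat.sum_antidiagonal_swap]
  refine Finset.sum_congr rfl fun x _ => ?_
  simp [qPoly, Quaternion.coe_commutes]

theorem bf_final (c N : ℝ[X]) (hc : c ≠ 0) (hcop : IsCoprime c N) (p p' : Hq) (P K : Hq[X])
    (hK : K * (X - C p') = qPoly N)
    (e : qPoly c * (X - C p) = (X - C p') * P) : p' = p ∧ P = qPoly c := by
  obtain ⟨u, v, huv⟩ := hcop
  have hq : qPoly u * qPoly c + qPoly v * qPoly N = 1 := by
    have := congrArg qPoly huv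
    simpa [qPoly] using this
  have hc0 : qPoly c ≠ 0 := by
    unfold qPoly
    rwa [Ne, Polynomial.map_eq_zero_iff (algebraMap ℝ Hq).injective]
  obtain ⟨Q, hQ⟩ : ∃ Q, P = qPoly c * Q := by
    refine ⟨qPoly u * P + qPoly v * (K * (X - C p)), ?_⟩
    have h1 : qPoly N * P = qPoly c * (K * (X - C p)) := by
      rw [← hK, mul_assoc, ← e, ← mul_assoc, ← bf_qPoly_comm, mul_assoc]
    calc P = (qPoly u * qPoly c + qPoly v * qPoly N) * P := by rw [hq, one_mul]
      _ = qPoly u * qPoly c * P + qPoly v * (qPoly N * P) := by rw [add_mul, mul_assoc (qPoly v)]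
      _ = _ := by
        rw [h1, mul_add, bf_qPoly_comm u, mul_assoc, ← mul_assoc (qPoly v), bf_qPoly_comm v,
          mul_assoc]
  have h2 : X - C p = (X - C p') * Q := by
    apply mul_left_cancel₀ hc0
    rw [e, hQ, ← mul_assoc, ← mul_assoc, bf_qPoly_comm]
  have hm : Q.Monic := by
    have := monic_X_sub_C p
    rw [h2] at this
    exact (monic_X_sub_C p').of_mul_monic_left this
  have hd : Q.natDegree = 0 := by
    have := congrArg natDegree h2
    rw [(monic_X_sub_C p').natDegree_mul hm, natDegree_X_sub_C, natDegree_X_sub_C] at this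
    omega
  have hQ1 : Q = 1 := hm.natDegree_eq_zero.1 hd
  subst hQ1
  rw [mul_one] at hQ h2
  refine ⟨?_, hQ⟩
  exact (C_injective (sub_right_injective h2)).symm
end BF

/-- Bennett flips: a linear motion polynomial factor of coprime norm can be moved to the
other side of a translational motion polynomial of primary norm. -/
theorem bennett_flip
    (n : ℕ) (c : ℝ[X]) (D : Hq[X]) (N₁ N₂ : ℝ[X]) (p d : Hq) (M : DHq[X])
    (hM : M = mp (qPoly c) D)
    (hmonic : M.Monic) (hmotion : IsMotion M)
    (hred : ReducedD M) (hbdd : BoundedD M)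
    (hdeg : M.natDegree = n)
    (hN1 : N₁.natDegree = 2) (hN1irr : Irreducible N₁)
    (hN2 : N₂.natDegree = 2) (hN2irr : Irreducible N₂)
    (hnorm : M * cstar M = dPoly (c ^ 2)) (hcN : c ^ 2 = N₁ ^ n)
    (hlmotion : IsMotion (lin p d)) (hlred : ReducedD (lin p d))
    (hlbdd : BoundedD (lin p d))
    (hlnorm : lin p d * cstar (lin p d) = dPoly N₂)
    (hcop : IsCoprime N₁ N₂)
    (hfact : HasLinFact M) :
    ∃ (D₁ : Hq[X]) (d₁ : Hq),
      IsMotion (lin p d₁) ∧ HasLinFact (mp (qPoly c) D₁) ∧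
      M * lin p d = lin p d₁ * mp (qPoly c) D₁ := by
  obtain ⟨L, hL, hLM⟩ := hfact
  rw [bf_lin] at hlnorm
  obtain ⟨a', b', hk⟩ := bf_motion' _ _ hlnorm
  have hN2' : N₂ = X ^ 2 - C a' * X + C b' := by
    apply bf_dPoly_inj
    rw [← hlnorm, bf_norm _ _ _ hk]
  obtain ⟨F, hF, hF'⟩ := bf_list_norm L hL
  rw [← hLM, hnorm] at hF
  have hFc := bf_dPoly_inj _ _ hF
  have hcop2 : IsCoprime (c ^ 2) N₂ := by
    rw [hcN]; exact hcop.pow_left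
  have hcopc : IsCoprime c N₂ := (IsCoprime.pow_left_iff (by norm_num)).1 hcop2
  have hL2 : ∀ h ∈ L, ∃ a b, BfTN a b h ∧ ¬ (a = a' ∧ b = b') := by
    intro h hh
    obtain ⟨a, b, h1, h2⟩ := hF' h hh
    refine ⟨a, b, h1, ?_⟩
    rintro ⟨rfl, rfl⟩
    rw [← hN2', ← hFc] at h2
    exact hN2irr.not_isUnit (hcop2.isUnit_of_dvd' h2 dvd_rfl)
  obtain ⟨k', L', hk', hL', e⟩ := bf_list a' b' L _ hk hL2
  rw [← hLM, ← bf_lin] at e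
  obtain ⟨D₁, hD₁⟩ := bf_mp_eta (L'.map fun h => (X - C h : DHq[X])).prod
  have hc0 : c ≠ 0 := by
    rintro rfl
    have : N₁ ^ n = 0 := by rw [← hcN]; simp
    exact pow_ne_zero n hN1irr.ne_zero this
  have e' := congrArg primal e
  rw [bf_primal_mul, bf_primal_mul, hM, bf_primal_mp, bf_lin, bf_primal_lin, bf_primal_lin] at e'
  simp only [fst_add, fst_inl, fst_inr, add_zero] at e'
  have hKK : primal (cstar (X - C k')) * (X - C k'.fst) = qPoly N₂ := by
    rw [← bf_primal_lin, ← bf_primal_mul, bf_cstar_lin, bf_lin_mul, bf_star_comm,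
      add_comm (star k'), hk'.1, hk'.2, ← bf_quad, bf_primal_dPoly, hN2']
  obtain ⟨hp, hP⟩ := bf_final c N₂ hc0 hcopc p k'.fst _ _ hKK e'
  have hlk : lin p k'.snd = X - C k' := by
    rw [bf_lin, ← hp, inl_fst_add_inr_snd_eq]
  rw [hP] at hD₁
  refine ⟨D₁, k'.snd, ?_, ⟨L', ?_, hD₁.symm⟩, ?_⟩
  · rw [hlk]; exact bf_motion _ _ _ hk'
  · intro h hh
    obtain ⟨a, b, hab⟩ := hL' h hh
    exact bf_motion _ _ _ hab
  · rw [e, hlk, hD₁]
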